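/- Assume E₀ ≠ ∅ and fix ε₀ > 0 such that C_{ε₀} ≠ ∅. For f ∈ F^∞ define its stationary set S_f = {c ∈ C_{ε₀} : there exists λ ∈ E₀ ∩ E_c with G_f(λ,0) = 0 and G_f(λ,c) = 0}. Then the set {f ∈ F^∞ : the Lebesgue measure of S_f is strictly positive} is meagre (of first category, i.e. contained in a countable union of nowhere dense sets) in F^∞ with the sup-norm metric. Equivalently, for all f ∈ F^∞ outside a first-category set, the system G_f(λ,0) = 0 = G_f(λ,c) has no solution λ ∈ E₀ ∩ E_c for Lebesgue-almost every c ∈ C_{ε₀}. -/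

import Mathlib

/-!
Write `P_f(x) = ∫_{slo}^x f(s) (1 - 2s)/s ds`. As `P_f(shi) = 0` for signals in the class,
`G_f(λ, c) = p P_f(m(λ,c)) - (1 - p) P_f(mm(λ,c))`; this is linear in `f`, differentiable in `(λ, c)`
and, locally uniformly in `(λ, c)`, Lipschitz in `f` for the sup metric (`Gfun_sub_le`).

The system `G_f(λ,0) = 0 = G_f(λ,c)` is treated by parametric transversality. For `c ≠ 0` outside the
single shock where `m = mm`, the functionals `G(λ,0)` and `G(λ,c)` are linearly independent on the
class (`equations_independent`): signals concentrated near two points on either side of `1/2` have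
trapezium-shaped primitives, so a vanishing combination has zero weight at each of the four cutoffs,
which `u ≠ v` excludes. Hence near each `(λ,c)` there are two signals `g, h` with
`G_g(λ,0) G_h(λ,c) - G_h(λ,0) G_g(λ,c) ≠ 0`, on a compact neighbourhood `K`; countably many such `K`
cover the domain.

Fix such a `K` and perturb `f` to the normalised mixture of `f + a g + b h`. For fixed `c`, the
parameters `(a, b)` for which the system has a solution in `K` lie on a differentiable curve indexed
by `λ`, a planar null set. By Fubini, arbitrarily small `(a, b)` have a null set of stationary shocks
in `K` (`exists_param`). By compactness, signals near that mixture have a stationary set of small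
measure in `K` (`exists_ball`). So the signals whose stationary set in `K` has measure at least `1/n`
form a nowhere dense set, and those with a stationary set of positive measure lie in the countable
union of these sets.
-/

open Set MeasureTheory
open scoped ENNReal

noncomputable section

/-- Cutoff of the match type: m(λ,c). -/
def mcut (u lam c : ℝ) : ℝ := lam * (1 + c) / (lam * (1 + c) + (u - c))

/-- Cutoff of the mismatch type: mm(λ,c). -/
def mmcut (v lam c : ℝ) : ℝ := lam * (1 - c) / (lam * (1 - c) + (v + c))

/-- Confounding region E_c. -/
def Econf (u v slo shi c : ℝ) : Set ℝ :=
  {lam : ℝ | 0 < lam ∧ mcut u lam c ∈ Ioo slo shi ∧ mmcut v lam c ∈ Ioo slo shi}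

/-- The signal class F^∞ on (slo, shi). -/
def Fclass (slo shi : ℝ) : Set (ℝ → ℝ) :=
  {f : ℝ → ℝ | ContinuousOn f (Ioo slo shi)
    ∧ (∀ s ∈ Ioo slo shi, 0 ≤ f s)
    ∧ (∫ s in slo..shi, f s) = 1
    ∧ (∫ s in slo..shi, f s * (1 - 2 * s) / s) = 0
    ∧ (∃ M : ℝ, ∀ s ∈ Ioo slo shi, |f s| ≤ M)
    ∧ (∃ M : ℝ, ∀ s ∈ Ioo slo shi, |f s * (1 - s) / s| ≤ M)}

/-- G_f(λ,c). -/
def Gfun (p u v slo shi : ℝ) (f : ℝ → ℝ) (lam c : ℝ) : ℝ :=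
  p * (∫ s in slo..(mcut u lam c), f s * (1 - 2 * s) / s)
  + (1 - p) * (∫ s in (mmcut v lam c)..shi, f s * (1 - 2 * s) / s)

/-- The shock set C. -/
def Cshock (u v slo shi : ℝ) : Set ℝ :=
  {c : ℝ | c ≠ 0 ∧ (Econf u v slo shi c).Nonempty}

/-- The meaningful shock set C_{ε₀}. -/
def Ceps (u v slo shi e0 : ℝ) : Set ℝ :=
  Cshock u v slo shi ∩ Ioo (-1 + e0) (u - e0) ∩ Ioo (-v + e0) (1 - e0)

/-- The sup-norm (L∞) distance between two signals on (slo, shi). -/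
def supDist (slo shi : ℝ) (f g : ℝ → ℝ) : ℝ :=
  ⨆ s : Ioo slo shi, |f s.1 - g s.1|

/-- `A` is nowhere dense in F^∞ w.r.t. the sup-norm metric: inside every ball of F^∞
there is a smaller ball of F^∞ disjoint from `A`. -/
def NowhereDenseIn (slo shi : ℝ) (A : Set (ℝ → ℝ)) : Prop :=
  ∀ f ∈ Fclass slo shi, ∀ ε > (0:ℝ), ∃ g ∈ Fclass slo shi,
    supDist slo shi f g < ε ∧ ∃ δ > (0:ℝ), ∀ h ∈ A, ¬ supDist slo shi g h < δ

/-- `A` is meagre (of first category) in F^∞ w.r.t. the sup-norm metric. -/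
def MeagreIn (slo shi : ℝ) (A : Set (ℝ → ℝ)) : Prop :=
  ∃ B : ℕ → Set (ℝ → ℝ), (∀ n, NowhereDenseIn slo shi (B n)) ∧ A ⊆ ⋃ n, B n

/-- `f` lies in the closure of `A` inside F^∞ w.r.t. the sup-norm metric. -/
def InClosureIn (slo shi : ℝ) (A : Set (ℝ → ℝ)) (f : ℝ → ℝ) : Prop :=
  ∀ ε > (0:ℝ), ∃ g ∈ A, supDist slo shi f g < ε

/-- The stationary set S_f of a signal f. -/
def statSet (p u v slo shi e0 : ℝ) (f : ℝ → ℝ) : Set ℝ :=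
  {c ∈ Ceps u v slo shi e0 | ∃ lam ∈ Econf u v slo shi 0 ∩ Econf u v slo shi c,
     Gfun p u v slo shi f lam 0 = 0 ∧ Gfun p u v slo shi f lam c = 0}

/-- F_n : signals whose stationary set has Lebesgue measure at least 1/n. -/
def Fn (p u v slo shi e0 : ℝ) (n : ℕ) : Set (ℝ → ℝ) :=
  {f ∈ Fclass slo shi | (1 : ℝ≥0∞) / n ≤ volume (statSet p u v slo shi e0 f)}

/-- M_λ : shocks in C_{ε₀} whose cutoffs at λ lie in [slo, shi]. -/
def Mset (u v slo shi e0 lam : ℝ) : Set ℝ :=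
  {c ∈ Ceps u v slo shi e0 | mcut u lam c ∈ Icc slo shi ∧ mmcut v lam c ∈ Icc slo shi}

/-- λ̲. -/
def lamLo (u v slo shi e0 : ℝ) : ℝ :=
  min ((u - sSup (Ceps u v slo shi e0)) / (1 + sSup (Ceps u v slo shi e0)))
      ((v + sInf (Ceps u v slo shi e0)) / (1 - sInf (Ceps u v slo shi e0)))

/-- λ̄. -/
def lamHi (u v slo shi e0 : ℝ) : ℝ :=
  max ((u - sInf (Ceps u v slo shi e0)) / (1 + sInf (Ceps u v slo shi e0)))
      ((v + sSup (Ceps u v slo shi e0)) / (1 - sSup (Ceps u v slo shi e0)))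

open Filter Topology

/-! ### Primitives of the integrand -/

/-- The integrand of `Gfun`. -/
def psi (f : ℝ → ℝ) (s : ℝ) : ℝ := f s * (1 - 2 * s) / s

/-- The primitive of `psi f` vanishing at `slo`. -/
def prim (slo : ℝ) (f : ℝ → ℝ) (x : ℝ) : ℝ := ∫ s in slo..x, psi f s

lemma Gfun_def' (p u v slo shi : ℝ) (f : ℝ → ℝ) (lam c : ℝ) :
    Gfun p u v slo shi f lam c
      = p * prim slo f (mcut u lam c) + (1 - p) * ∫ s in (mmcut v lam c)..shi, psi f s := rfl

lemma psi_continuousOn {slo shi : ℝ} (hslo : 0 ≤ slo) {f : ℝ → ℝ}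
    (hf : f ∈ Fclass slo shi) : ContinuousOn (psi f) (Ioo slo shi) := by
  have h1 := hf.1
  unfold psi
  refine ContinuousOn.div (h1.mul (by fun_prop)) continuousOn_id ?_
  intro x hx
  exact (lt_of_le_of_lt hslo hx.1).ne'

lemma psi_intervalIntegrable {slo shi : ℝ} (hslo : 0 ≤ slo) (hss : slo < shi) {f : ℝ → ℝ}
    (hf : f ∈ Fclass slo shi) : IntervalIntegrable (psi f) volume slo shi := by
  rw [intervalIntegrable_iff_integrableOn_Ioo_of_le hss.le]
  obtain ⟨M, hM⟩ := hf.2.2.2.2.1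
  obtain ⟨N, hN⟩ := hf.2.2.2.2.2
  refine IntegrableOn.of_bound (by simp)
    ((psi_continuousOn hslo hf).aestronglyMeasurable measurableSet_Ioo) (N + M) ?_
  refine (ae_restrict_iff' measurableSet_Ioo).2 (Eventually.of_forall fun s hs => ?_)
  have hs0 : s ≠ 0 := (lt_of_le_of_lt hslo hs.1).ne'
  have : psi f s = f s * (1 - s) / s - f s := by unfold psi; field_simp; ring
  rw [this, Real.norm_eq_abs]
  calc |f s * (1 - s) / s - f s| ≤ |f s * (1 - s) / s| + |f s| := abs_sub _ _
    _ ≤ _ := add_le_add (hN s hs) (hM s hs)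

lemma class_intervalIntegrable {slo shi : ℝ} (hss : slo < shi) {f : ℝ → ℝ}
    (hf : f ∈ Fclass slo shi) : IntervalIntegrable f volume slo shi := by
  rw [intervalIntegrable_iff_integrableOn_Ioo_of_le hss.le]
  obtain ⟨M, hM⟩ := hf.2.2.2.2.1
  refine IntegrableOn.of_bound (by simp) (hf.1.aestronglyMeasurable measurableSet_Ioo) M ?_
  exact (ae_restrict_iff' measurableSet_Ioo).2 (Eventually.of_forall fun s hs => hM s hs)

lemma psi_integrable_left {slo shi x : ℝ} (hslo : 0 ≤ slo) {f : ℝ → ℝ}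
    (hf : f ∈ Fclass slo shi) (hx : x ∈ Ioo slo shi) :
    IntervalIntegrable (psi f) volume slo x :=
  (psi_intervalIntegrable hslo (hx.1.trans hx.2) hf).mono_set <| by
    rw [uIcc_of_le hx.1.le, uIcc_of_le (hx.1.trans hx.2).le]
    exact Icc_subset_Icc_right hx.2.le

lemma psi_integrable_right {slo shi x : ℝ} (hslo : 0 ≤ slo) {f : ℝ → ℝ}
    (hf : f ∈ Fclass slo shi) (hx : x ∈ Ioo slo shi) :
    IntervalIntegrable (psi f) volume x shi :=
  (psi_intervalIntegrable hslo (hx.1.trans hx.2) hf).mono_set <| by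
    rw [uIcc_of_le hx.2.le, uIcc_of_le (hx.1.trans hx.2).le]
    exact Icc_subset_Icc_left hx.1.le

/-- The mean-zero constraint of the class makes both primitives opposite to each other. -/
lemma integral_right_eq {slo shi x : ℝ} (hslo : 0 ≤ slo) {f : ℝ → ℝ}
    (hf : f ∈ Fclass slo shi) (hx : x ∈ Ioo slo shi) :
    ∫ s in x..shi, psi f s = - prim slo f x := by
  have h := intervalIntegral.integral_add_adjacent_intervals
    (psi_integrable_left hslo hf hx) (psi_integrable_right hslo hf hx)
  have h0 : ∫ s in slo..shi, psi f s = 0 := hf.2.2.2.1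
  unfold prim
  linarith

lemma Gfun_eq {p u v slo shi lam c : ℝ} (hslo : 0 ≤ slo) {f : ℝ → ℝ}
    (hf : f ∈ Fclass slo shi) (hmm : mmcut v lam c ∈ Ioo slo shi) :
    Gfun p u v slo shi f lam c
      = p * prim slo f (mcut u lam c) - (1 - p) * prim slo f (mmcut v lam c) := by
  rw [Gfun_def', integral_right_eq hslo hf hmm]
  ring

lemma psi_stronglyMeasurableAt {slo shi x : ℝ} (hslo : 0 ≤ slo) {f : ℝ → ℝ}
    (hf : f ∈ Fclass slo shi) (hx : x ∈ Ioo slo shi) :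
    StronglyMeasurableAtFilter (psi f) (𝓝 x) volume :=
  (psi_continuousOn hslo hf).stronglyMeasurableAtFilter isOpen_Ioo x hx

lemma prim_differentiableAt {slo shi x : ℝ} (hslo : 0 ≤ slo) {f : ℝ → ℝ}
    (hf : f ∈ Fclass slo shi) (hx : x ∈ Ioo slo shi) :
    DifferentiableAt ℝ (prim slo f) x :=
  (intervalIntegral.integral_hasDerivAt_right (psi_integrable_left hslo hf hx)
    (psi_stronglyMeasurableAt hslo hf hx)
    ((psi_continuousOn hslo hf).continuousAt (isOpen_Ioo.mem_nhds hx))).differentiableAt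

lemma right_differentiableAt {slo shi x : ℝ} (hslo : 0 ≤ slo) {f : ℝ → ℝ}
    (hf : f ∈ Fclass slo shi) (hx : x ∈ Ioo slo shi) :
    DifferentiableAt ℝ (fun y => ∫ s in y..shi, psi f s) x :=
  (intervalIntegral.integral_hasDerivAt_left (psi_integrable_right hslo hf hx)
    (psi_stronglyMeasurableAt hslo hf hx)
    ((psi_continuousOn hslo hf).continuousAt (isOpen_Ioo.mem_nhds hx))).differentiableAt

lemma abs_sub_le_supDist {slo shi : ℝ} {f g : ℝ → ℝ} (hf : f ∈ Fclass slo shi)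
    (hg : g ∈ Fclass slo shi) {s : ℝ} (hs : s ∈ Ioo slo shi) :
    |f s - g s| ≤ supDist slo shi f g := by
  obtain ⟨M, hM⟩ := hf.2.2.2.2.1
  obtain ⟨N, hN⟩ := hg.2.2.2.2.1
  have hb : BddAbove (range fun s : Ioo slo shi => |f s.1 - g s.1|) := by
    refine ⟨M + N, ?_⟩
    rintro _ ⟨s, rfl⟩
    exact (abs_sub _ _).trans (add_le_add (hM _ s.2) (hN _ s.2))
  exact le_ciSup hb ⟨s, hs⟩

/-- Away from `0` the primitive depends continuously on the signal in the sup metric. Since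
`1 / s` may be non-integrable near `slo = 0`, the primitive is computed from the right end. -/
lemma prim_sub_le {slo shi a x : ℝ} (hslo : 0 ≤ slo) (hshi : shi ≤ 1) {f g : ℝ → ℝ}
    (hf : f ∈ Fclass slo shi) (hg : g ∈ Fclass slo shi) (hx : x ∈ Ioo slo shi)
    (ha : 0 < a) (hax : a ≤ x) :
    |prim slo f x - prim slo g x| ≤ supDist slo shi f g / a := by
  have h1 := integral_right_eq hslo hf hx
  have h2 := integral_right_eq hslo hg hx
  have h3 : prim slo f x - prim slo g x = - ∫ s in x..shi, (psi f s - psi g s) := by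
    rw [intervalIntegral.integral_sub (psi_integrable_right hslo hf hx)
      (psi_integrable_right hslo hg hx)]
    linarith
  have hd : 0 ≤ supDist slo shi f g := (abs_nonneg _).trans (abs_sub_le_supDist hf hg hx)
  have h4 : ‖∫ s in x..shi, (psi f s - psi g s)‖ ≤ supDist slo shi f g / a * |shi - x| := by
    refine intervalIntegral.norm_integral_le_of_norm_le_const_ae ?_
    filter_upwards [compl_mem_ae_iff.2 (measure_singleton shi)] with s hs hs'
    rw [uIoc_of_le hx.2.le] at hs'
    have hs2 : s < shi := lt_of_le_of_ne hs'.2 hs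
    have hsa : a ≤ s := hax.trans hs'.1.le
    have hs0 : 0 < s := ha.trans_le hsa
    have : psi f s - psi g s = (f s - g s) * ((1 - 2 * s) / s) := by unfold psi; ring
    rw [this, Real.norm_eq_abs, abs_mul, div_eq_mul_inv (supDist slo shi f g)]
    refine mul_le_mul (abs_sub_le_supDist hf hg ⟨hx.1.trans hs'.1, hs2⟩) ?_ (abs_nonneg _) hd
    rw [abs_div, abs_of_pos hs0, div_le_iff₀ hs0]
    have : |1 - 2 * s| ≤ 1 := abs_le.2 ⟨by linarith, by linarith⟩
    have : 1 ≤ a⁻¹ * s := by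
      rw [inv_mul_eq_div, le_div_iff₀ ha]; linarith
    linarith
  rw [h3, abs_neg]
  refine h4.trans (mul_le_of_le_one_right (by positivity) ?_)
  rw [abs_of_pos (by linarith [hx.2])]
  linarith [hx.1]

lemma Gfun_sub_le {p u v slo shi a lam c : ℝ} (hp : p ∈ Ioo (0 : ℝ) 1) (hslo : 0 ≤ slo)
    (hshi : shi ≤ 1) {f g : ℝ → ℝ}
    (hf : f ∈ Fclass slo shi) (hg : g ∈ Fclass slo shi) (hm : mcut u lam c ∈ Ioo slo shi)
    (hmm : mmcut v lam c ∈ Ioo slo shi)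
    (ha : 0 < a) (ham : a ≤ mcut u lam c) (hamm : a ≤ mmcut v lam c) :
    |Gfun p u v slo shi f lam c - Gfun p u v slo shi g lam c| ≤ supDist slo shi f g / a := by
  rw [Gfun_eq hslo hf hmm, Gfun_eq hslo hg hmm]
  have h1 := abs_le.1 (prim_sub_le hslo hshi hf hg hm ha ham)
  have h2 := abs_le.1 (prim_sub_le hslo hshi hf hg hmm ha hamm)
  obtain ⟨hp0, hp1⟩ := hp
  rw [abs_le]
  constructor <;> nlinarith

/-! ### Perturbations inside the class -/

/-- The normalised mixture of three signals with weights `1`, `a`, `b`. -/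
def mix (f g h : ℝ → ℝ) (a b : ℝ) (s : ℝ) : ℝ := (f s + a * g s + b * h s) / (1 + a + b)

lemma psi_mix (f g h : ℝ → ℝ) (a b s : ℝ) :
    psi (mix f g h a b) s = (psi f s + a * psi g s + b * psi h s) / (1 + a + b) := by
  unfold psi mix; ring

lemma mix_integral {φ χ ω : ℝ → ℝ} {x y : ℝ} (a b : ℝ) (h1 : IntervalIntegrable φ volume x y)
    (h2 : IntervalIntegrable χ volume x y) (h3 : IntervalIntegrable ω volume x y) :
    ∫ s in x..y, (φ s + a * χ s + b * ω s) / (1 + a + b)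
      = ((∫ s in x..y, φ s) + a * (∫ s in x..y, χ s) + b * ∫ s in x..y, ω s) / (1 + a + b) := by
  rw [intervalIntegral.integral_div, intervalIntegral.integral_add (h1.add (h2.const_mul a))
    (h3.const_mul b), intervalIntegral.integral_add h1 (h2.const_mul a),
    intervalIntegral.integral_const_mul, intervalIntegral.integral_const_mul]

lemma mix_mem {slo shi : ℝ} (hslo : 0 ≤ slo) (hss : slo < shi) {f g h : ℝ → ℝ}
    (hf : f ∈ Fclass slo shi) (hg : g ∈ Fclass slo shi) (hh : h ∈ Fclass slo shi) {a b : ℝ}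
    (ha : 0 ≤ a) (hb : 0 ≤ b) : mix f g h a b ∈ Fclass slo shi := by
  have hD : 0 < 1 + a + b := by positivity
  refine ⟨?_, ?_, ?_, ?_, ?_, ?_⟩
  · have h1 := hf.1
    have h2 := hg.1
    have h3 := hh.1
    unfold mix
    fun_prop
  · intro s hs
    have h1 := hf.2.1 s hs
    have h2 := hg.2.1 s hs
    have h3 := hh.2.1 s hs
    unfold mix
    positivity
  · have := mix_integral a b (class_intervalIntegrable hss hf) (class_intervalIntegrable hss hg)
      (class_intervalIntegrable hss hh)
    rw [hf.2.2.1, hg.2.2.1, hh.2.2.1] at this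
    unfold mix
    rw [this]
    field_simp
  · have := mix_integral a b (psi_intervalIntegrable hslo hss hf)
      (psi_intervalIntegrable hslo hss hg) (psi_intervalIntegrable hslo hss hh)
    simp_rw [← psi_mix] at this
    have e1 : ∫ s in slo..shi, psi f s = 0 := hf.2.2.2.1
    have e2 : ∫ s in slo..shi, psi g s = 0 := hg.2.2.2.1
    have e3 : ∫ s in slo..shi, psi h s = 0 := hh.2.2.2.1
    rw [e1, e2, e3] at this
    refine Eq.trans this ?_
    simp
  · obtain ⟨M, hM⟩ := hf.2.2.2.2.1
    obtain ⟨N, hN⟩ := hg.2.2.2.2.1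
    obtain ⟨O, hO⟩ := hh.2.2.2.2.1
    refine ⟨(M + a * N + b * O) / (1 + a + b), fun s hs => ?_⟩
    unfold mix
    rw [abs_div, abs_of_pos hD]
    gcongr
    refine (abs_add_three _ _ _).trans ?_
    rw [abs_mul, abs_mul, abs_of_nonneg ha, abs_of_nonneg hb]
    gcongr
    exacts [hM s hs, hN s hs, hO s hs]
  · obtain ⟨M, hM⟩ := hf.2.2.2.2.2
    obtain ⟨N, hN⟩ := hg.2.2.2.2.2
    obtain ⟨O, hO⟩ := hh.2.2.2.2.2
    refine ⟨(M + a * N + b * O) / (1 + a + b), fun s hs => ?_⟩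
    have : mix f g h a b s * (1 - s) / s = (f s * (1 - s) / s + a * (g s * (1 - s) / s)
        + b * (h s * (1 - s) / s)) / (1 + a + b) := by
      unfold mix; ring
    rw [this, abs_div, abs_of_pos hD]
    gcongr
    refine (abs_add_three _ _ _).trans ?_
    rw [abs_mul, abs_mul, abs_of_nonneg ha, abs_of_nonneg hb]
    gcongr
    exacts [hM s hs, hN s hs, hO s hs]

lemma prim_mix {slo shi x : ℝ} (hslo : 0 ≤ slo) {f g h : ℝ → ℝ}
    (hf : f ∈ Fclass slo shi) (hg : g ∈ Fclass slo shi) (hh : h ∈ Fclass slo shi) (a b : ℝ)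
    (hx : x ∈ Ioo slo shi) :
    prim slo (mix f g h a b) x
      = (prim slo f x + a * prim slo g x + b * prim slo h x) / (1 + a + b) := by
  unfold prim
  simp_rw [psi_mix]
  exact mix_integral a b (psi_integrable_left hslo hf hx) (psi_integrable_left hslo hg hx)
    (psi_integrable_left hslo hh hx)

lemma Gfun_mix {p u v slo shi lam c : ℝ} (hslo : 0 ≤ slo) (hss : slo < shi) {f g h : ℝ → ℝ}
    (hf : f ∈ Fclass slo shi) (hg : g ∈ Fclass slo shi) (hh : h ∈ Fclass slo shi) {a b : ℝ}
    (ha : 0 ≤ a) (hb : 0 ≤ b) (hm : mcut u lam c ∈ Ioo slo shi)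
    (hmm : mmcut v lam c ∈ Ioo slo shi) :
    Gfun p u v slo shi (mix f g h a b) lam c
      = (Gfun p u v slo shi f lam c + a * Gfun p u v slo shi g lam c
          + b * Gfun p u v slo shi h lam c) / (1 + a + b) := by
  rw [Gfun_eq hslo hf hmm, Gfun_eq hslo hg hmm, Gfun_eq hslo hh hmm,
    Gfun_eq hslo (mix_mem hslo hss hf hg hh ha hb) hmm, prim_mix hslo hf hg hh a b hm,
    prim_mix hslo hf hg hh a b hmm]
  ring

/-- Mixtures with small weights stay close to the original signal. -/
lemma exists_mix_close {slo shi : ℝ} {f g h : ℝ → ℝ}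
    (hf : f ∈ Fclass slo shi) (hg : g ∈ Fclass slo shi) (hh : h ∈ Fclass slo shi) {ε : ℝ}
    (hε : 0 < ε) : ∃ r > 0, ∀ a ∈ Icc 0 r, ∀ b ∈ Icc 0 r,
      supDist slo shi f (mix f g h a b) < ε := by
  obtain ⟨M, hM⟩ := hf.2.2.2.2.1
  obtain ⟨N, hN⟩ := hg.2.2.2.2.1
  obtain ⟨O, hO⟩ := hh.2.2.2.2.1
  set L := |M| + |N| + |O| + 1 with hL
  have hL0 : 0 < L := by positivity
  refine ⟨ε / (4 * L), by positivity, fun a ha b hb => ?_⟩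
  suffices supDist slo shi f (mix f g h a b) ≤ ε / 2 by linarith
  refine Real.iSup_le (fun s => ?_) (by positivity)
  have ha0 := ha.1
  have hb0 := hb.1
  have hD : 0 < 1 + a + b := by linarith
  have e : f s.1 - mix f g h a b s.1
      = (a * (f s.1 - g s.1) + b * (f s.1 - h s.1)) / (1 + a + b) := by
    unfold mix; field_simp; ring
  have b1 : |f s.1 - g s.1| ≤ L := by
    refine (abs_sub _ _).trans ?_
    linarith [hM _ s.2, hN _ s.2, le_abs_self M, le_abs_self N, abs_nonneg O]
  have b2 : |f s.1 - h s.1| ≤ L := by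
    refine (abs_sub _ _).trans ?_
    linarith [hM _ s.2, hO _ s.2, le_abs_self M, le_abs_self O, abs_nonneg N]
  rw [e, abs_div, abs_of_pos hD]
  refine (div_le_self (abs_nonneg _) (by linarith)).trans ((abs_add_le _ _).trans ?_)
  rw [abs_mul, abs_mul, abs_of_nonneg ha0, abs_of_nonneg hb0]
  calc a * |f s.1 - g s.1| + b * |f s.1 - h s.1|
      ≤ ε / (4 * L) * L + ε / (4 * L) * L := by
        gcongr
        exacts [ha.2, hb.2]
    _ = ε / 2 := by field_simp; ring

/-! ### The domain of the system -/

/-- Pairs `(lam, c)` at which the system is studied. The last condition discards the single shock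
at which `mcut` and `mmcut` agree for every `lam`. -/
def dom (u v slo shi : ℝ) : Set (ℝ × ℝ) :=
  {q | 0 < q.1 ∧ (-1 < q.2 ∧ q.2 < u) ∧ (-v < q.2 ∧ q.2 < 1)
    ∧ (mcut u q.1 0 ∈ Ioo slo shi ∧ mmcut v q.1 0 ∈ Ioo slo shi)
    ∧ (mcut u q.1 q.2 ∈ Ioo slo shi ∧ mmcut v q.1 q.2 ∈ Ioo slo shi)
    ∧ q.2 ≠ 0 ∧ q.2 * (2 + u + v) ≠ u - v}

lemma mcut_differentiableAt {u : ℝ} {q : ℝ × ℝ} (h0 : 0 < q.1) (h1 : -1 < q.2) (h2 : q.2 < u) :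
    DifferentiableAt ℝ (fun q : ℝ × ℝ => mcut u q.1 q.2) q := by
  unfold mcut
  have : q.1 * (1 + q.2) + (u - q.2) ≠ 0 := by
    have := mul_pos h0 (by linarith : 0 < 1 + q.2)
    linarith
  fun_prop (disch := assumption)

lemma mmcut_differentiableAt {v : ℝ} {q : ℝ × ℝ} (h0 : 0 < q.1) (h1 : -v < q.2) (h2 : q.2 < 1) :
    DifferentiableAt ℝ (fun q : ℝ × ℝ => mmcut v q.1 q.2) q := by
  unfold mmcut
  have : q.1 * (1 - q.2) + (v + q.2) ≠ 0 := by
    have := mul_pos h0 (by linarith : 0 < 1 - q.2)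
    linarith
  fun_prop (disch := assumption)

lemma mcut_zero_differentiableAt {u : ℝ} (hu : 0 < u) {q : ℝ × ℝ} (h0 : 0 < q.1) :
    DifferentiableAt ℝ (fun q : ℝ × ℝ => mcut u q.1 0) q :=
  DifferentiableAt.comp (f := fun q : ℝ × ℝ => (q.1, (0 : ℝ))) q
    (mcut_differentiableAt (q := (q.1, 0)) h0 (by simp) hu) (by fun_prop)

lemma mmcut_zero_differentiableAt {v : ℝ} (hv : 0 < v) {q : ℝ × ℝ} (h0 : 0 < q.1) :
    DifferentiableAt ℝ (fun q : ℝ × ℝ => mmcut v q.1 0) q :=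
  DifferentiableAt.comp (f := fun q : ℝ × ℝ => (q.1, (0 : ℝ))) q
    (mmcut_differentiableAt (q := (q.1, 0)) h0 (by simpa using hv) (by simp)) (by fun_prop)

lemma dom_isOpen {u v slo shi : ℝ} (hu : 0 < u) (hv : 0 < v) : IsOpen (dom u v slo shi) := by
  rw [isOpen_iff_mem_nhds]
  rintro q ⟨h0, ⟨h1, h2⟩, ⟨h3, h4⟩, ⟨h5, h6⟩, ⟨h7, h8⟩, h9, h10⟩
  have c1 : ContinuousAt (fun q : ℝ × ℝ => q.1) q := by fun_prop
  have c2 : ContinuousAt (fun q : ℝ × ℝ => q.2) q := by fun_prop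
  have c3 : ContinuousAt (fun q : ℝ × ℝ => q.2 * (2 + u + v)) q := by fun_prop
  have d1 := (mcut_zero_differentiableAt hu h0).continuousAt.eventually_mem (isOpen_Ioo.mem_nhds h5)
  have d2 := (mmcut_zero_differentiableAt hv h0).continuousAt.eventually_mem
    (isOpen_Ioo.mem_nhds h6)
  have d3 := (mcut_differentiableAt h0 h1 h2).continuousAt.eventually_mem (isOpen_Ioo.mem_nhds h7)
  have d4 := (mmcut_differentiableAt h0 h3 h4).continuousAt.eventually_mem (isOpen_Ioo.mem_nhds h8)
  filter_upwards [c1.eventually_mem (isOpen_Ioi.mem_nhds h0),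
    c2.eventually_mem (isOpen_Ioo.mem_nhds ⟨h1, h2⟩),
    c2.eventually_mem (isOpen_Ioo.mem_nhds ⟨h3, h4⟩), d1, d2, d3, d4, c2.eventually_ne h9,
    c3.eventually_ne h10] with x e0 e1 e2 e3 e4 e5 e6 e7 e8
  exact ⟨e0, e1, e2, ⟨e3, e4⟩, ⟨e5, e6⟩, e7, e8⟩

lemma Gfun_differentiableAt {p u v slo shi : ℝ} (hslo : 0 ≤ slo) {f : ℝ → ℝ}
    (hf : f ∈ Fclass slo shi) {q : ℝ × ℝ} (hq : q ∈ dom u v slo shi) :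
    DifferentiableAt ℝ (fun q : ℝ × ℝ => Gfun p u v slo shi f q.1 q.2) q := by
  obtain ⟨h0, ⟨h1, h2⟩, ⟨h3, h4⟩, -, ⟨h7, h8⟩, -⟩ := hq
  simp only [Gfun_def']
  have a1 := DifferentiableAt.comp q (prim_differentiableAt hslo hf h7)
    (mcut_differentiableAt h0 h1 h2)
  have a2 := DifferentiableAt.comp q (right_differentiableAt hslo hf h8)
    (mmcut_differentiableAt h0 h3 h4)
  exact (a1.const_mul p).add (a2.const_mul (1 - p))

lemma Gfun_zero_differentiableAt {p u v slo shi : ℝ} (hu : 0 < u) (hv : 0 < v) (hslo : 0 ≤ slo)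
    {f : ℝ → ℝ} (hf : f ∈ Fclass slo shi) {q : ℝ × ℝ} (hq : q ∈ dom u v slo shi) :
    DifferentiableAt ℝ (fun q : ℝ × ℝ => Gfun p u v slo shi f q.1 0) q := by
  obtain ⟨h0, -, -, ⟨h5, h6⟩, -⟩ := hq
  simp only [Gfun_def']
  have a1 := DifferentiableAt.comp q (prim_differentiableAt hslo hf h5)
    (mcut_zero_differentiableAt hu h0)
  have a2 := DifferentiableAt.comp q (right_differentiableAt hslo hf h6)
    (mmcut_zero_differentiableAt hv h0)
  exact (a1.const_mul p).add (a2.const_mul (1 - p))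

/-! ### Generic parameters have a null stationary set -/

/-- Shocks whose system has a solution `(lam, c)` in `K`. -/
def statK (p u v slo shi : ℝ) (K : Set (ℝ × ℝ)) (f : ℝ → ℝ) : Set ℝ :=
  {c | ∃ lam, (lam, c) ∈ K ∧ Gfun p u v slo shi f lam 0 = 0 ∧ Gfun p u v slo shi f lam c = 0}

/-- Parametric transversality for two functions affine in two parameters `t`: if the system is
invertible in `t` over `K`, then for fixed `c` the parameters admitting a solution lie on a
differentiable curve, so by Fubini almost every `t` admits solutions only for a null set of `c`. -/
lemma exists_param {K U : Set (ℝ × ℝ)} (hK : IsCompact K) (hU : K ⊆ U)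
    {A0 A1 A2 B0 B1 B2 : ℝ × ℝ → ℝ}
    (dA0 : ∀ q ∈ U, DifferentiableAt ℝ A0 q) (dA1 : ∀ q ∈ U, DifferentiableAt ℝ A1 q)
    (dA2 : ∀ q ∈ U, DifferentiableAt ℝ A2 q) (dB0 : ∀ q ∈ U, DifferentiableAt ℝ B0 q)
    (dB1 : ∀ q ∈ U, DifferentiableAt ℝ B1 q) (dB2 : ∀ q ∈ U, DifferentiableAt ℝ B2 q)
    (hdet : ∀ q ∈ K, A1 q * B2 q - A2 q * B1 q ≠ 0) {r : ℝ} (hr : 0 < r) :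
    ∃ a ∈ Icc 0 r, ∃ b ∈ Icc 0 r,
      volume {c : ℝ | ∃ lam : ℝ, (lam, c) ∈ K ∧ A0 (lam, c) + a * A1 (lam, c) + b * A2 (lam, c) = 0
        ∧ B0 (lam, c) + a * B1 (lam, c) + b * B2 (lam, c) = 0} = 0 := by
  set box : Set (ℝ × ℝ) := Icc 0 r ×ˢ Icc 0 r with hbox
  have hboxc : IsCompact box := isCompact_Icc.prod isCompact_Icc
  set Φ : (ℝ × ℝ) × (ℝ × ℝ) → ℝ × ℝ := fun z =>
    (A0 z.1 + z.2.1 * A1 z.1 + z.2.2 * A2 z.1, B0 z.1 + z.2.1 * B1 z.1 + z.2.2 * B2 z.1) with hΦ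
  have lift : ∀ {F : ℝ × ℝ → ℝ}, (∀ q ∈ U, DifferentiableAt ℝ F q) →
      ContinuousOn (fun z : (ℝ × ℝ) × (ℝ × ℝ) => F z.1) (K ×ˢ box) := by
    intro F hF
    have h1 : ContinuousOn F K := fun q hq => (hF q (hU hq)).continuousAt.continuousWithinAt
    exact h1.comp continuousOn_fst (fun z hz => hz.1)
  have hΦc : ContinuousOn Φ (K ×ˢ box) := by
    have t1 : ContinuousOn (fun z : (ℝ × ℝ) × (ℝ × ℝ) => z.2.1) (K ×ˢ box) :=
      (by fun_prop : Continuous _).continuousOn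
    have t2 : ContinuousOn (fun z : (ℝ × ℝ) × (ℝ × ℝ) => z.2.2) (K ×ˢ box) :=
      (by fun_prop : Continuous _).continuousOn
    exact (((lift dA0).add (t1.mul (lift dA1))).add (t2.mul (lift dA2))).prodMk
      (((lift dB0).add (t1.mul (lift dB1))).add (t2.mul (lift dB2)))
  have hKb : IsCompact (K ×ˢ box) := hK.prod hboxc
  have hX : IsCompact ((K ×ˢ box) ∩ Φ ⁻¹' {(0, 0)}) :=
    hKb.of_isClosed_subset
      (hΦc.preimage_isClosed_of_isClosed hKb.isClosed isClosed_singleton) inter_subset_left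
  set T : Set ((ℝ × ℝ) × ℝ) := (fun z : (ℝ × ℝ) × (ℝ × ℝ) => (z.2, z.1.2)) ''
    ((K ×ˢ box) ∩ Φ ⁻¹' {(0, 0)}) with hT
  have hTm : MeasurableSet T := (hX.image (by fun_prop)).isClosed.measurableSet
  have hslice : ∀ c : ℝ, volume ((fun t : ℝ × ℝ => (t, c)) ⁻¹' T) = 0 := by
    intro c
    -- Cramer's rule expresses the parameters as a differentiable function of `lam`.
    set τ : ℝ × ℝ → ℝ × ℝ := fun q =>
      ((-A0 (q.1, c) * B2 (q.1, c) + A2 (q.1, c) * B0 (q.1, c))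
          / (A1 (q.1, c) * B2 (q.1, c) - A2 (q.1, c) * B1 (q.1, c)),
        (-A1 (q.1, c) * B0 (q.1, c) + B1 (q.1, c) * A0 (q.1, c))
          / (A1 (q.1, c) * B2 (q.1, c) - A2 (q.1, c) * B1 (q.1, c))) with hτ
    set S : Set (ℝ × ℝ) := {lam | (lam, c) ∈ K} ×ˢ {(0 : ℝ)} with hS
    have hS0 : volume S = 0 := by
      rw [hS, Measure.volume_eq_prod, Measure.prod_prod]; simp
    have hτd : DifferentiableOn ℝ τ S := by
      intro q hq
      have hqK : (q.1, c) ∈ K := hq.1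
      have sl : ∀ {F : ℝ × ℝ → ℝ}, (∀ q ∈ U, DifferentiableAt ℝ F q) →
          DifferentiableAt ℝ (fun x : ℝ × ℝ => F (x.1, c)) q := by
        intro F hF
        exact DifferentiableAt.comp (f := fun x : ℝ × ℝ => (x.1, c)) q (hF _ (hU hqK))
          (by fun_prop)
      have hd := hdet _ hqK
      have dd : DifferentiableAt ℝ (fun x : ℝ × ℝ =>
          A1 (x.1, c) * B2 (x.1, c) - A2 (x.1, c) * B1 (x.1, c)) q :=
        ((sl dA1).mul (sl dB2)).sub ((sl dA2).mul (sl dB1))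
      have di : DifferentiableAt ℝ (fun x : ℝ × ℝ =>
          (A1 (x.1, c) * B2 (x.1, c) - A2 (x.1, c) * B1 (x.1, c))⁻¹) q :=
        DifferentiableAt.fun_comp' q (differentiableAt_inv hd) dd
      have τ1 := (((sl dA0).neg.mul (sl dB2)).add ((sl dA2).mul (sl dB0))).mul di
      have τ2 := (((sl dA1).neg.mul (sl dB0)).add ((sl dB1).mul (sl dA0))).mul di
      have hτq : DifferentiableAt ℝ τ q := by
        simp only [hτ, div_eq_mul_inv]
        exact τ1.prodMk τ2
      exact hτq.differentiableWithinAt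
    refine measure_mono_null ?_
      (addHaar_image_eq_zero_of_differentiableOn_of_addHaar_eq_zero volume hτd hS0)
    rintro t ⟨⟨⟨lam, c'⟩, t'⟩, ⟨⟨hzK, -⟩, hz⟩, he⟩
    simp only [Prod.mk.injEq] at he
    obtain ⟨rfl, rfl⟩ := he
    simp only [hΦ, mem_preimage, mem_singleton_iff, Prod.mk.injEq] at hz
    refine ⟨(lam, 0), ⟨hzK, rfl⟩, ?_⟩
    have hd := hdet _ hzK
    simp only at hzK hz
    ext
    · simp only [hτ]
      rw [div_eq_iff hd]
      linear_combination (-B2 (lam, c')) * hz.1 + A2 (lam, c') * hz.2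
    · simp only [hτ]
      rw [div_eq_iff hd]
      linear_combination B1 (lam, c') * hz.1 - A1 (lam, c') * hz.2
  have hT0 : (volume.prod volume : Measure ((ℝ × ℝ) × ℝ)) T = 0 := by
    rw [Measure.prod_apply_symm hTm]
    simp [hslice]
  have hae := Measure.measure_ae_null_of_prod_null hT0
  have hboxpos : (volume : Measure (ℝ × ℝ)) box ≠ 0 := by
    rw [hbox, Measure.volume_eq_prod, Measure.prod_prod]
    simp [hr]
  obtain ⟨⟨a, b⟩, ⟨ha, hb⟩, ht⟩ := ((frequently_ae_mem_iff.2 hboxpos).and_eventually hae).exists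
  refine ⟨a, ha, b, hb, measure_mono_null ?_ ht⟩
  rintro c ⟨lam, hK', h1, h2⟩
  exact ⟨((lam, c), (a, b)), ⟨⟨hK', ha, hb⟩, by simp [hΦ, h1, h2]⟩, rfl⟩

/-- A null stationary set stays small under small perturbations of the signal: off an open
neighbourhood of it, compactness bounds the system away from zero. -/
lemma exists_ball {p u v slo shi : ℝ} (hp : p ∈ Ioo (0 : ℝ) 1) (hu : 0 < u) (hv : 0 < v)
    (hslo : 0 ≤ slo) (hshi : shi ≤ 1) {K : Set (ℝ × ℝ)} (hK : IsCompact K)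
    (hKd : K ⊆ dom u v slo shi) {g : ℝ → ℝ} (hg : g ∈ Fclass slo shi)
    (h0 : volume (statK p u v slo shi K g) = 0) {η : ℝ≥0∞} (hη : 0 < η) :
    ∃ δ > 0, ∀ h ∈ Fclass slo shi, supDist slo shi g h < δ →
      volume (statK p u v slo shi K h) < η := by
  obtain ⟨U, hSU, hUo, hUv⟩ := Set.exists_isOpen_lt_of_lt _ η (h0.trans_lt hη)
  obtain ⟨a, ha, haK⟩ : ∃ a, 0 < a ∧ ∀ q ∈ K, a ≤ min (min (mcut u q.1 0) (mmcut v q.1 0))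
      (min (mcut u q.1 q.2) (mmcut v q.1 q.2)) := by
    refine hK.exists_forall_le' ?_ ?_
    · intro q hq
      obtain ⟨h0, ⟨h1, h2⟩, ⟨h3, h4⟩, -⟩ := hKd hq
      have c1 := (mcut_zero_differentiableAt hu h0).continuousAt
      have c2 := (mmcut_zero_differentiableAt hv h0).continuousAt
      have c3 := (mcut_differentiableAt h0 h1 h2).continuousAt
      have c4 := (mmcut_differentiableAt h0 h3 h4).continuousAt
      exact ContinuousAt.continuousWithinAt ((c1.min c2).min (c3.min c4))
    · intro q hq
      obtain ⟨-, -, -, ⟨h5, h6⟩, ⟨h7, h8⟩, -⟩ := hKd hq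
      simp only [lt_min_iff]
      exact ⟨⟨hslo.trans_lt h5.1, hslo.trans_lt h6.1⟩, hslo.trans_lt h7.1, hslo.trans_lt h8.1⟩
  have hK' : IsCompact (K ∩ Prod.snd ⁻¹' Uᶜ) :=
    hK.inter_right (hUo.isClosed_compl.preimage continuous_snd)
  obtain ⟨b, hb, hbK⟩ : ∃ b, 0 < b ∧ ∀ q ∈ K ∩ Prod.snd ⁻¹' Uᶜ,
      b ≤ |Gfun p u v slo shi g q.1 0| + |Gfun p u v slo shi g q.1 q.2| := by
    refine hK'.exists_forall_le' ?_ ?_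
    · intro q hq
      exact ((Gfun_zero_differentiableAt hu hv hslo hg (hKd hq.1)).continuousAt.abs.add
        (Gfun_differentiableAt hslo hg (hKd hq.1)).continuousAt.abs).continuousWithinAt
    · rintro ⟨lam, c⟩ ⟨hq, hc⟩
      by_contra hcon
      have n1 := abs_nonneg (Gfun p u v slo shi g lam 0)
      have n2 := abs_nonneg (Gfun p u v slo shi g lam c)
      exact hc (hSU ⟨lam, hq, abs_eq_zero.1 (by simp only at hcon; linarith),
        abs_eq_zero.1 (by simp only at hcon; linarith)⟩)
  refine ⟨a * b / 2, by positivity, fun h hh hd => (measure_mono ?_).trans_lt hUv⟩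
  rintro c ⟨lam, hq, e1, e2⟩
  by_contra hc
  obtain ⟨-, -, -, ⟨h5, h6⟩, ⟨h7, h8⟩, -⟩ := hKd hq
  have hmin := haK _ hq
  simp only [le_min_iff] at hmin
  have i1 := Gfun_sub_le hp hslo hshi hg hh h5 h6 ha hmin.1.1 hmin.1.2
  have i2 := Gfun_sub_le hp hslo hshi hg hh h7 h8 ha hmin.2.1 hmin.2.2
  have i3 := hbK _ ⟨hq, hc⟩
  have i4 : supDist slo shi g h / a < b / 2 := by
    rw [div_lt_iff₀ ha]; linarith
  simp only at i1 i2 i3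
  rw [e1, sub_zero] at i1
  rw [e2, sub_zero] at i2
  linarith

/-- A compact set on which two fixed signals make the system invertible in the mixing weights
gives rise to nowhere dense sets of signals. -/
lemma nowhereDense_statK {p u v slo shi : ℝ} (hp : p ∈ Ioo (0 : ℝ) 1) (hu : 0 < u) (hv : 0 < v)
    (hslo : 0 ≤ slo) (hss : slo < shi) (hshi : shi ≤ 1) {K : Set (ℝ × ℝ)} (hK : IsCompact K)
    (hKd : K ⊆ dom u v slo shi) {g h : ℝ → ℝ} (hg : g ∈ Fclass slo shi) (hh : h ∈ Fclass slo shi)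
    (hdet : ∀ q ∈ K, Gfun p u v slo shi g q.1 0 * Gfun p u v slo shi h q.1 q.2
      - Gfun p u v slo shi h q.1 0 * Gfun p u v slo shi g q.1 q.2 ≠ 0)
    {η : ℝ≥0∞} (hη : 0 < η) :
    NowhereDenseIn slo shi {f ∈ Fclass slo shi | η ≤ volume (statK p u v slo shi K f)} := by
  intro f hf ε hε
  obtain ⟨r, hr, hclose⟩ := exists_mix_close hf hg hh hε
  obtain ⟨a, ha, b, hb, hnull⟩ := exists_param hK hKd
    (fun q hq => Gfun_zero_differentiableAt (p := p) hu hv hslo hf hq)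
    (fun q hq => Gfun_zero_differentiableAt (p := p) hu hv hslo hg hq)
    (fun q hq => Gfun_zero_differentiableAt (p := p) hu hv hslo hh hq)
    (fun q hq => Gfun_differentiableAt (p := p) hslo hf hq)
    (fun q hq => Gfun_differentiableAt (p := p) hslo hg hq)
    (fun q hq => Gfun_differentiableAt (p := p) hslo hh hq) hdet hr
  have hmem := mix_mem hslo hss hf hg hh ha.1 hb.1
  have hD : 1 + a + b ≠ 0 := by linarith [ha.1, hb.1]
  have hz : volume (statK p u v slo shi K (mix f g h a b)) = 0 := by
    refine measure_mono_null ?_ hnull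
    rintro c ⟨lam, hq, e1, e2⟩
    obtain ⟨-, -, -, ⟨h5, h6⟩, ⟨h7, h8⟩, -⟩ := hKd hq
    rw [Gfun_mix hslo hss hf hg hh ha.1 hb.1 h5 h6, div_eq_zero_iff, or_iff_left hD] at e1
    rw [Gfun_mix hslo hss hf hg hh ha.1 hb.1 h7 h8, div_eq_zero_iff, or_iff_left hD] at e2
    exact ⟨lam, hq, e1, e2⟩
  obtain ⟨δ, hδ, hball⟩ := exists_ball hp hu hv hslo hshi hK hKd hmem hz hη
  exact ⟨_, hmem, hclose a ha b hb, δ, hδ, fun k hk hlt => (hball k hk.1 hlt).not_ge hk.2⟩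

/-! ### Independence of the two equations -/

/-- A continuous bump carried by `[α, β]` with unit mass. -/
lemma exists_bump {slo α β : ℝ} (h1 : slo ≤ α) (h2 : α < β) :
    ∃ b : ℝ → ℝ, Continuous b ∧ (∀ s, 0 ≤ b s) ∧ (∀ s, s ≤ α → b s = 0) ∧ (∀ s, β ≤ s → b s = 0)
      ∧ (∀ z, slo ≤ z → z ≤ α → ∫ s in slo..z, b s = 0)
      ∧ (∀ z, β ≤ z → ∫ s in slo..z, b s = 1) := by
  set k : ℝ → ℝ := fun s => max 0 ((s - α) * (β - s)) with hk
  have kc : Continuous k := by fun_prop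
  have k0 : ∀ s, 0 ≤ k s := fun s => le_max_left _ _
  have kl : ∀ s, s ≤ α → k s = 0 := fun s hs => max_eq_left (by nlinarith)
  have kr : ∀ s, β ≤ s → k s = 0 := fun s hs => max_eq_left (by nlinarith)
  have kI : 0 < ∫ s in α..β, k s := by
    refine intervalIntegral.intervalIntegral_pos_of_pos_on (kc.intervalIntegrable _ _) ?_ h2
    intro s hs
    exact lt_max_of_lt_right (mul_pos (by linarith [hs.1]) (by linarith [hs.2]))
  have zl : ∀ z, slo ≤ z → z ≤ α → ∫ s in slo..z, k s = 0 := by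
    intro z hz hz'
    rw [intervalIntegral.integral_congr (g := fun _ => (0 : ℝ)) ?_]
    · simp
    · intro s hs
      rw [uIcc_of_le hz] at hs
      exact kl s (hs.2.trans hz')
  have zr : ∀ z, β ≤ z → ∫ s in slo..z, k s = ∫ s in α..β, k s := by
    intro z hz
    have e : ∫ s in β..z, k s = 0 := by
      rw [intervalIntegral.integral_congr (g := fun _ => (0 : ℝ)) ?_]
      · simp
      · intro s hs
        rw [uIcc_of_le hz] at hs
        exact kr s hs.1
    rw [← intervalIntegral.integral_add_adjacent_intervals (kc.intervalIntegrable slo β)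
      (kc.intervalIntegrable β z), ← intervalIntegral.integral_add_adjacent_intervals
      (kc.intervalIntegrable slo α) (kc.intervalIntegrable α β), e, zl α h1 le_rfl]
    ring
  refine ⟨fun s => k s / ∫ s in α..β, k s, by fun_prop, fun s => div_nonneg (k0 s) kI.le,
    fun s hs => by simp [kl s hs], fun s hs => by simp [kr s hs], fun z hz hz' => ?_,
    fun z hz => ?_⟩
  · rw [intervalIntegral.integral_div, zl z hz hz', zero_div]
  · rw [intervalIntegral.integral_div, zr z hz, div_self kI.ne']

/-- A signal concentrated on `[x, x']` and `[y, y']`, on either side of `1 / 2`. Its primitive is a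
trapezium: zero up to `x`, constant on `[x', y]`, and zero from `y'` on. -/
lemma exists_trapezium {slo shi x x' y y' : ℝ} (hslo : 0 ≤ slo) (h1 : slo < x) (h2 : x < x')
    (h3 : x' < 1 / 2) (h4 : 1 / 2 < y) (h5 : y < y') (h6 : y' < shi) :
    ∃ g ∈ Fclass slo shi, ∃ Z > 0, (∀ z ∈ Ioo slo shi, z ≤ x → prim slo g z = 0)
      ∧ (∀ z, x' ≤ z → z ≤ y → prim slo g z = Z)
      ∧ (∀ z ∈ Ioo slo shi, y' ≤ z → prim slo g z = 0) := by
  obtain ⟨b, bc, b0, bl, br, bzl, bzr⟩ := exists_bump h1.le h2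
  obtain ⟨d, dc, d0, dl, dr, dzl, dzr⟩ := exists_bump (by linarith : slo ≤ y) h5
  -- The maxima remove the pole of `1 / (1 - 2 s)` without changing values on the two supports.
  set k : ℝ → ℝ := fun s => b s / max (1 - 2 * s) (1 - 2 * x') + d s / max (2 * s - 1) (2 * y - 1)
    with hk
  have m1 : ∀ s : ℝ, 0 < max (1 - 2 * s) (1 - 2 * x') :=
    fun s => lt_max_of_lt_right (by linarith)
  have m2 : ∀ s : ℝ, 0 < max (2 * s - 1) (2 * y - 1) :=
    fun s => lt_max_of_lt_right (by linarith)
  have kc : Continuous k :=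
    (bc.div (by fun_prop) fun s => (m1 s).ne').add (dc.div (by fun_prop) fun s => (m2 s).ne')
  have k0 : ∀ s, 0 ≤ k s := fun s =>
    add_nonneg (div_nonneg (b0 s) (m1 s).le) (div_nonneg (d0 s) (m2 s).le)
  have kpsi : ∀ s, k s * (1 - 2 * s) = b s - d s := by
    intro s
    have e1 : b s / max (1 - 2 * s) (1 - 2 * x') * (1 - 2 * s) = b s := by
      rcases le_total s x' with h | h
      · rw [max_eq_left (by linarith)]
        have : 1 - 2 * s ≠ 0 := by linarith
        field_simp
      · simp [br s h]
    have e2 : d s / max (2 * s - 1) (2 * y - 1) * (1 - 2 * s) = - d s := by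
      rcases le_total s y with h | h
      · simp [dl s h]
      · rw [max_eq_left (by linarith)]
        have : 2 * s - 1 ≠ 0 := by linarith
        field_simp
        ring
    rw [hk]
    simp only
    rw [add_mul, e1, e2]
    ring
  have hss : slo < shi := by linarith
  set Z := ∫ s in slo..shi, s * k s with hZ
  have hZ0 : 0 < Z := by
    have : ∫ s in slo..shi, x * b s ≤ Z := by
      refine intervalIntegral.integral_mono_on hss.le
        ((bc.const_mul x).intervalIntegrable _ _)
        ((continuous_id.mul kc).intervalIntegrable _ _) ?_
      intro s hs
      have hs0 : 0 ≤ s := hslo.trans hs.1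
      rcases le_total s x with h | h
      · rw [bl s h, mul_zero]
        exact mul_nonneg hs0 (k0 s)
      · have : b s ≤ k s := by
          refine le_trans ?_ (le_add_of_nonneg_right (div_nonneg (d0 s) (m2 s).le))
          exact le_div_self (b0 s) (m1 s) (max_le (by linarith) (by linarith))
        exact mul_le_mul h this (b0 s) hs0
    rw [intervalIntegral.integral_const_mul, bzr shi (by linarith)] at this
    linarith
  set g : ℝ → ℝ := fun s => s * k s / Z with hg
  have gc : Continuous g := (continuous_id.mul kc).div_const Z
  have gpsi : ∀ s ∈ Ioi (0 : ℝ), psi g s = (b s - d s) / Z := by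
    intro s hs
    have hs0 : s ≠ 0 := ne_of_gt hs
    unfold psi
    rw [← kpsi, hg]
    field_simp
  have gprim : ∀ z, slo ≤ z →
      ∫ s in slo..z, psi g s = ((∫ s in slo..z, b s) - ∫ s in slo..z, d s) / Z := by
    intro z hz
    rw [← intervalIntegral.integral_sub (bc.intervalIntegrable _ _) (dc.intervalIntegrable _ _),
      ← intervalIntegral.integral_div]
    refine intervalIntegral.integral_congr_ae (Eventually.of_forall fun s hs => ?_)
    rw [uIoc_of_le hz] at hs
    exact gpsi s (hslo.trans_lt hs.1)
  have bdd : ∀ {φ : ℝ → ℝ}, Continuous φ → ∃ M, ∀ s ∈ Ioo slo shi, |φ s| ≤ M := by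
    intro φ hφ
    obtain ⟨M, hM⟩ := isCompact_Icc.exists_bound_of_continuousOn (s := Icc slo shi) hφ.continuousOn
    exact ⟨M, fun s hs => hM s (Ioo_subset_Icc_self hs)⟩
  refine ⟨g, ⟨gc.continuousOn, ?_, ?_, ?_, bdd gc, ?_⟩, 1 / Z, by positivity, ?_, ?_, ?_⟩
  · intro s hs
    exact div_nonneg (mul_nonneg (hslo.trans hs.1.le) (k0 s)) hZ0.le
  · rw [hg, intervalIntegral.integral_div, ← hZ, div_self hZ0.ne']
  · refine (gprim shi hss.le).trans ?_
    rw [bzr shi (by linarith), dzr shi h6.le]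
    simp
  · obtain ⟨M, hM⟩ := bdd ((kc.mul (by fun_prop : Continuous fun s : ℝ => 1 - s)).div_const Z)
    refine ⟨M, fun s hs => ?_⟩
    have hs0 : s ≠ 0 := (hslo.trans_lt hs.1).ne'
    have : g s * (1 - s) / s = k s * (1 - s) / Z := by rw [hg]; field_simp
    rw [this]
    exact hM s hs
  · intro z hz hzx
    refine (gprim z hz.1.le).trans ?_
    rw [bzl z hz.1.le hzx, dzl z hz.1.le (by linarith)]
    simp
  · intro z hz hz'
    refine (gprim z (by linarith)).trans ?_
    rw [bzr z hz, dzl z (by linarith) hz', sub_zero]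
  · intro z hz hz'
    refine (gprim z hz.1.le).trans ?_
    rw [bzr z (by linarith), dzr z hz']
    simp

lemma exists_gap {ι : Type*} [Finite ι] (b : ι → ℝ) : ∃ η > 0, ∀ i, 0 < b i → η ≤ b i := by
  have h : ∀ᶠ η in 𝓝[>] (0 : ℝ), ∀ i, 0 < b i → η ≤ b i := by
    rw [eventually_all]
    intro i
    by_cases hi : 0 < b i
    · filter_upwards [Ioo_mem_nhdsGT hi] with η hη _
      exact hη.2.le
    · exact Eventually.of_forall fun η h => absurd h hi
  obtain ⟨η, hη, hη0⟩ := (h.and self_mem_nhdsWithin).exists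
  exact ⟨η, hη0, hη⟩

/-- A finite combination of point evaluations that kills all primitives has zero total weight on
each open interval around `1 / 2`. -/
lemma interval_weight {ι : Type*} [Fintype ι] {slo shi : ℝ} (hslo : 0 ≤ slo) {a κ : ι → ℝ}
    (ha : ∀ i, a i ∈ Ioo slo shi)
    (h : ∀ g ∈ Fclass slo shi, ∑ i, κ i * prim slo g (a i) = 0) {x y : ℝ} (hx : slo < x)
    (hx2 : x < 1 / 2) (hy2 : 1 / 2 < y) (hy : y < shi) :
    ∑ i, (if x < a i ∧ a i < y then κ i else 0) = 0 := by
  obtain ⟨η₁, h1, g1⟩ := exists_gap fun i => a i - x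
  obtain ⟨η₂, h2, g2⟩ := exists_gap fun i => y - a i
  set η := min (min η₁ η₂) (min ((1 / 2 - x) / 2) ((y - 1 / 2) / 2)) with hη
  have hη0 : 0 < η := lt_min (lt_min h1 h2) (lt_min (by linarith) (by linarith))
  have e1 : η ≤ η₁ := (min_le_left _ _).trans (min_le_left _ _)
  have e2 : η ≤ η₂ := (min_le_left _ _).trans (min_le_right _ _)
  have e3 : η ≤ (1 / 2 - x) / 2 := (min_le_right _ _).trans (min_le_left _ _)
  have e4 : η ≤ (y - 1 / 2) / 2 := (min_le_right _ _).trans (min_le_right _ _)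
  obtain ⟨g, hg, Z, hZ, p1, p2, p3⟩ := exists_trapezium (x := x) (x' := x + η) (y := y - η)
    (y' := y) hslo hx (by linarith) (by linarith) (by linarith) (by linarith) hy
  have key : ∑ i, κ i * prim slo g (a i) = (∑ i, (if x < a i ∧ a i < y then κ i else 0)) * Z := by
    rw [Finset.sum_mul]
    refine Finset.sum_congr rfl fun i _ => ?_
    split_ifs with hi
    · have := g1 i (by linarith [hi.1])
      have := g2 i (by linarith [hi.2])
      rw [p2 (a i) (by linarith) (by linarith)]
    · rcases not_and_or.1 hi with h' | h'
      · rw [p1 _ (ha i) (not_lt.1 h')]; simp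
      · rw [p3 _ (ha i) (not_lt.1 h')]; simp
  rw [h g hg] at key
  exact (mul_eq_zero.1 key.symm).resolve_right hZ.ne'

/-- Such a combination has zero total weight at every point. -/
lemma point_weight {ι : Type*} [Fintype ι] {slo shi : ℝ} (hslo : 0 ≤ slo) (h1 : slo < 1 / 2)
    (h2 : 1 / 2 < shi) {a κ : ι → ℝ} (ha : ∀ i, a i ∈ Ioo slo shi)
    (h : ∀ g ∈ Fclass slo shi, ∑ i, κ i * prim slo g (a i) = 0) {z : ℝ} (hz : z ∈ Ioo slo shi) :
    ∑ i, (if a i = z then κ i else 0) = 0 := by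
  obtain ⟨η₁, h3, g1⟩ := exists_gap fun i => z - a i
  obtain ⟨η₂, h4, g2⟩ := exists_gap fun i => a i - z
  have hz1 := hz.1
  have hz2 := hz.2
  set η := min (min η₁ η₂) (min ((z - slo) / 2) ((shi - z) / 2)) with hη
  have hη0 : 0 < η := lt_min (lt_min h3 h4) (lt_min (by linarith) (by linarith))
  have e1 : η ≤ η₁ := (min_le_left _ _).trans (min_le_left _ _)
  have e2 : η ≤ η₂ := (min_le_left _ _).trans (min_le_right _ _)
  have e3 : η ≤ (z - slo) / 2 := (min_le_right _ _).trans (min_le_left _ _)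
  have e4 : η ≤ (shi - z) / 2 := (min_le_right _ _).trans (min_le_right _ _)
  rcases lt_trichotomy z (1 / 2) with hc | hc | hc
  · have w1 := interval_weight hslo ha h (x := z - η) (y := (1 / 2 + shi) / 2) (by linarith)
      (by linarith) (by linarith) (by linarith)
    have w2 := interval_weight hslo ha h (x := z) (y := (1 / 2 + shi) / 2) (by linarith)
      (by linarith) (by linarith) (by linarith)
    have : ∑ i, (if a i = z then κ i else 0)
        = (∑ i, (if z - η < a i ∧ a i < (1 / 2 + shi) / 2 then κ i else 0))
          - ∑ i, (if z < a i ∧ a i < (1 / 2 + shi) / 2 then κ i else 0) := by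
      rw [← Finset.sum_sub_distrib]
      refine Finset.sum_congr rfl fun i _ => ?_
      have := g1 i
      grind
    rw [this, w1, w2, sub_zero]
  · have w1 := interval_weight hslo ha h (x := z - η) (y := z + η) (by linarith)
      (by linarith) (by linarith) (by linarith)
    rw [← w1]
    refine Finset.sum_congr rfl fun i _ => ?_
    have := g1 i
    have := g2 i
    grind
  · have w1 := interval_weight hslo ha h (x := (slo + 1 / 2) / 2) (y := z + η) (by linarith)
      (by linarith) (by linarith) (by linarith)
    have w2 := interval_weight hslo ha h (x := (slo + 1 / 2) / 2) (y := z) (by linarith)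
      (by linarith) (by linarith) (by linarith)
    have : ∑ i, (if a i = z then κ i else 0)
        = (∑ i, (if (slo + 1 / 2) / 2 < a i ∧ a i < z + η then κ i else 0))
          - ∑ i, (if (slo + 1 / 2) / 2 < a i ∧ a i < z then κ i else 0) := by
      rw [← Finset.sum_sub_distrib]
      refine Finset.sum_congr rfl fun i _ => ?_
      have := g2 i
      grind
    rw [this, w1, w2, sub_zero]

/-- On the class, the equations at shocks `0` and `c` are linearly independent: the four cutoffs
never coincide in a way that lets their weights cancel. This is where `u ≠ v` enters. -/
lemma equations_independent {p u v slo shi : ℝ} (hp : p ∈ Ioo (0 : ℝ) 1) (hu : 0 < u) (hv : 0 < v)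
    (huv : u ≠ v) (hslo : 0 ≤ slo) (h1 : slo < 1 / 2) (h2 : 1 / 2 < shi)
    {q : ℝ × ℝ} (hq : q ∈ dom u v slo shi) {α β : ℝ}
    (h : ∀ g ∈ Fclass slo shi,
      α * Gfun p u v slo shi g q.1 0 + β * Gfun p u v slo shi g q.1 q.2 = 0) :
    α = 0 ∧ β = 0 := by
  obtain ⟨lam, c⟩ := q
  obtain ⟨h0, ⟨c1, c2⟩, ⟨c3, c4⟩, ⟨h5, h6⟩, ⟨h7, h8⟩, h9, h10⟩ := hq
  simp only at h0 c1 c2 c3 c4 h5 h6 h7 h8 h9 h10 h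
  have hl1 : 0 < lam * (1 + c) := mul_pos h0 (by linarith)
  have hl2 : 0 < lam * (1 - c) := mul_pos h0 (by linarith)
  have n1 : mcut u lam 0 ≠ mmcut v lam 0 := by
    unfold mcut mmcut
    intro e
    rw [div_eq_div_iff (by linarith) (by linarith)] at e
    exact huv (mul_left_cancel₀ h0.ne' (by linarith))
  have n2 : mcut u lam 0 ≠ mcut u lam c := by
    unfold mcut
    intro e
    rw [div_eq_div_iff (by linarith) (by linarith)] at e
    have : lam * (c * (1 + u)) = lam * 0 := by linarith
    have := mul_left_cancel₀ h0.ne' this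
    exact h9 ((mul_eq_zero.1 this).resolve_right (by linarith))
  have n3 : mmcut v lam 0 ≠ mmcut v lam c := by
    unfold mmcut
    intro e
    rw [div_eq_div_iff (by linarith) (by linarith)] at e
    have : lam * (c * (1 + v)) = lam * 0 := by linarith
    have := mul_left_cancel₀ h0.ne' this
    exact h9 ((mul_eq_zero.1 this).resolve_right (by linarith))
  have n4 : mcut u lam c ≠ mmcut v lam c := by
    unfold mcut mmcut
    intro e
    rw [div_eq_div_iff (by linarith) (by linarith)] at e
    exact h10 (mul_left_cancel₀ h0.ne' (by linarith))
  have n5 : ¬ (mcut u lam 0 = mmcut v lam c ∧ mmcut v lam 0 = mcut u lam c) := by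
    unfold mcut mmcut
    rintro ⟨e, e'⟩
    rw [div_eq_div_iff (by linarith) (by linarith)] at e e'
    have : lam * (c * (v - u)) = lam * 0 := by linarith
    have := mul_left_cancel₀ h0.ne' this
    rcases mul_eq_zero.1 this with h' | h'
    · exact h9 h'
    · exact huv (by linarith)
  obtain ⟨hp0, hp1⟩ := hp
  have W : ∀ z ∈ Ioo slo shi, _ := fun z hz => point_weight hslo h1 h2
    (a := ![mcut u lam 0, mmcut v lam 0, mcut u lam c, mmcut v lam c])
    (κ := ![α * p, -(α * (1 - p)), β * p, -(β * (1 - p))])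
    (by intro i; fin_cases i <;> assumption)
    (by
      intro g hg
      have := h g hg
      rw [Gfun_eq hslo hg h6, Gfun_eq hslo hg h8] at this
      simp only [Fin.sum_univ_four, Matrix.cons_val]
      linarith) hz
  simp only [Fin.sum_univ_four, Matrix.cons_val] at W
  have w1 := W _ h5
  have w2 := W _ h6
  have w3 := W _ h7
  have w4 := W _ h8
  have hp' : 1 - p ≠ 0 := by linarith
  by_cases hA : mcut u lam 0 = mmcut v lam c
  · have hB : mmcut v lam 0 ≠ mcut u lam c := fun e => n5 ⟨hA, e⟩
    simp only [n1, hB.symm, n3.symm, if_true, if_false, zero_add, add_zero, neg_eq_zero] at w2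
    simp only [n2, hB, n4.symm, if_true, if_false, zero_add, add_zero] at w3
    exact ⟨(mul_eq_zero.1 w2).resolve_right hp', (mul_eq_zero.1 w3).resolve_right hp0.ne'⟩
  · simp only [n1.symm, n2.symm, Ne.symm hA, if_true, if_false, add_zero] at w1
    simp only [hA, n3, n4, if_true, if_false, zero_add, neg_eq_zero] at w4
    exact ⟨(mul_eq_zero.1 w1).resolve_right hp0.ne', (mul_eq_zero.1 w4).resolve_right hp'⟩

lemma exists_pair {p u v slo shi : ℝ} (hp : p ∈ Ioo (0 : ℝ) 1) (hu : 0 < u) (hv : 0 < v)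
    (huv : u ≠ v) (hslo : 0 ≤ slo) (h1 : slo < 1 / 2) (h2 : 1 / 2 < shi)
    {q : ℝ × ℝ} (hq : q ∈ dom u v slo shi) :
    ∃ g ∈ Fclass slo shi, ∃ h ∈ Fclass slo shi,
      Gfun p u v slo shi g q.1 0 * Gfun p u v slo shi h q.1 q.2
        - Gfun p u v slo shi h q.1 0 * Gfun p u v slo shi g q.1 q.2 ≠ 0 := by
  by_contra! hcon
  have hz : ∀ g ∈ Fclass slo shi,
      Gfun p u v slo shi g q.1 0 = 0 := by
    intro g hg
    have := equations_independent hp hu hv huv hslo h1 h2 hq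
      (α := -Gfun p u v slo shi g q.1 q.2) (β := Gfun p u v slo shi g q.1 0)
      (fun h hh => by linarith [hcon g hg h hh])
    exact this.2
  have := equations_independent hp hu hv huv hslo h1 h2 hq (α := 1) (β := 0)
    (fun g hg => by simp [hz g hg])
  exact one_ne_zero this.1

/-! ### Assembling the countable cover -/

/-- The mean-zero constraint forces signals on both sides of `1 / 2`. -/
lemma half_mem_of_mem {slo shi : ℝ} (hslo : 0 ≤ slo) (hss : slo < shi) {f : ℝ → ℝ}
    (hf : f ∈ Fclass slo shi) : slo < 1 / 2 ∧ 1 / 2 < shi := by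
  by_contra hcon
  have hne : ∀ s ∈ Ioo slo shi, 1 - 2 * s ≠ 0 := by
    intro s hs e
    exact hcon ⟨by linarith [hs.1], by linarith [hs.2]⟩
  have hint := (intervalIntegrable_iff_integrableOn_Ioo_of_le hss.le).1
    (psi_intervalIntegrable hslo hss hf)
  have hz : ∫ s in Ioo slo shi, psi f s = 0 := by
    rw [← integral_Ioc_eq_integral_Ioo, ← intervalIntegral.integral_of_le hss.le]
    exact hf.2.2.2.1
  have hae : ∀ᵐ s ∂(volume.restrict (Ioo slo shi)), psi f s = 0 := by
    rcases le_or_gt (1 / 2) slo with hc | hc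
    · have hnn : 0 ≤ᵐ[volume.restrict (Ioo slo shi)] (fun s => - psi f s) := by
        refine (ae_restrict_iff' measurableSet_Ioo).2 (Eventually.of_forall fun s hs => ?_)
        have := hf.2.1 s hs
        have hs1 := hs.1
        have : psi f s ≤ 0 := div_nonpos_of_nonpos_of_nonneg
          (mul_nonpos_of_nonneg_of_nonpos this (by linarith)) (by linarith)
        simpa using this
      have := (integral_eq_zero_iff_of_nonneg_ae hnn hint.neg).1 (by rw [integral_neg, hz, neg_zero])
      filter_upwards [this] with s hs
      simpa using hs
    · have hc' : shi ≤ 1 / 2 := not_lt.1 fun h => hcon ⟨hc, h⟩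
      have hnn : 0 ≤ᵐ[volume.restrict (Ioo slo shi)] (psi f) := by
        refine (ae_restrict_iff' measurableSet_Ioo).2 (Eventually.of_forall fun s hs => ?_)
        have := hf.2.1 s hs
        have hs1 := hs.1
        have hs2 := hs.2
        exact div_nonneg (mul_nonneg this (by linarith)) (by linarith)
      exact (integral_eq_zero_iff_of_nonneg_ae hnn hint).1 hz
  have hf0 : ∀ᵐ s ∂(volume.restrict (Ioo slo shi)), f s = 0 := by
    filter_upwards [hae, ae_restrict_mem measurableSet_Ioo] with s hs hs'
    have hs0 : s ≠ 0 := (hslo.trans_lt hs'.1).ne'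
    unfold psi at hs
    simpa [hs0, hne s hs'] using hs
  have hone := hf.2.2.1
  rw [intervalIntegral.integral_of_le hss.le, integral_Ioc_eq_integral_Ioo,
    integral_congr_ae (g := fun _ => (0 : ℝ)) hf0] at hone
  simp at hone

lemma meagre_of_countable {ι : Type*} [Countable ι] {slo shi : ℝ} {A : Set (ℝ → ℝ)}
    (B : ι → Set (ℝ → ℝ)) (hB : ∀ i, NowhereDenseIn slo shi (B i)) (hA : A ⊆ ⋃ i, B i) :
    MeagreIn slo shi A := by
  obtain ⟨e, he⟩ := exists_surjective_nat (Option ι)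
  refine ⟨fun n => (e n).elim ∅ B, fun n => ?_, fun f hf => ?_⟩
  · dsimp only
    cases e n with
    | none =>
      intro f hf ε hε
      exact ⟨f, hf, by simpa [supDist] using hε, 1, one_pos, by simp⟩
    | some i => simpa using hB i
  · obtain ⟨i, hi⟩ := mem_iUnion.1 (hA hf)
    obtain ⟨n, hn⟩ := he (some i)
    exact mem_iUnion.2 ⟨n, by simpa [hn] using hi⟩

/-- Confounded learning is fragile: the set of signals whose stationary
set has positive Lebesgue measure is meagre in F^∞ (sup-norm metric). -/
theorem fragility_of_confounded_learning
    (p u v slo shi e0 : ℝ)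
    (hp : p ∈ Ioo (0:ℝ) 1) (hu : 0 < u) (hv : 0 < v) (huv : u ≠ v)
    (hslo : 0 ≤ slo) (hss : slo < shi) (hshi : shi ≤ 1)
    (hE0 : (Econf u v slo shi 0).Nonempty)
    (he0 : 0 < e0) (hC : (Ceps u v slo shi e0).Nonempty) :
    MeagreIn slo shi
      {f ∈ Fclass slo shi | 0 < volume (statSet p u v slo shi e0 f)} := by
  by_cases hhalf : slo < 1 / 2 ∧ 1 / 2 < shi
  swap
  · -- The class is empty.
    refine meagre_of_countable (ι := Empty) (fun _ => ∅) (fun i => i.elim) ?_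
    rintro f ⟨hf, -⟩
    exact absurd (half_mem_of_mem hslo hss hf) hhalf
  have hloc : ∀ q ∈ dom u v slo shi, ∃ K ∈ 𝓝 q, IsCompact K ∧ K ⊆ dom u v slo shi ∧
      ∃ g ∈ Fclass slo shi, ∃ h ∈ Fclass slo shi, ∀ q ∈ K,
        Gfun p u v slo shi g q.1 0 * Gfun p u v slo shi h q.1 q.2
          - Gfun p u v slo shi h q.1 0 * Gfun p u v slo shi g q.1 q.2 ≠ 0 := by
    intro q hq
    obtain ⟨g, hg, h, hh, hdet⟩ := exists_pair hp hu hv huv hslo hhalf.1 hhalf.2 hq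
    have hcont := (((Gfun_zero_differentiableAt (p := p) hu hv hslo hg hq).mul
      (Gfun_differentiableAt (p := p) hslo hh hq)).sub
      ((Gfun_zero_differentiableAt (p := p) hu hv hslo hh hq).mul
      (Gfun_differentiableAt (p := p) hslo hg hq))).continuousAt
    obtain ⟨K, hK, hKs, hKc⟩ := local_compact_nhds
      (inter_mem ((dom_isOpen hu hv).mem_nhds hq) (hcont.eventually_ne hdet))
    exact ⟨K, hK, hKc, fun x hx => (hKs hx).1, g, hg, h, hh, fun x hx => (hKs hx).2⟩
  choose! K hKn hKc hKd g hg h hh hdet using hloc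
  obtain ⟨t, htd, htc, hcov⟩ := TopologicalSpace.countable_cover_nhdsWithin
    (fun q hq => mem_nhdsWithin_of_mem_nhds (hKn q hq))
  have := htc.to_subtype
  refine meagre_of_countable (ι := t × ℕ)
    (fun i => {f ∈ Fclass slo shi | ((i.2 : ℝ≥0∞))⁻¹ ≤ volume (statK p u v slo shi (K i.1) f)})
    (fun i => nowhereDense_statK hp hu hv hslo hss hshi (hKc _ (htd i.1.2)) (hKd _ (htd i.1.2))
      (hg _ (htd i.1.2)) (hh _ (htd i.1.2)) (hdet _ (htd i.1.2)) (by simp)) ?_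
  rintro f ⟨hf, hpos⟩
  have hsub : statSet p u v slo shi e0 f
      ⊆ (⋃ x ∈ t, statK p u v slo shi (K x) f) ∪ {(u - v) / (2 + u + v)} := by
    rintro c ⟨⟨⟨⟨hc0, -⟩, hc1⟩, hc2⟩, lam, ⟨⟨hl, hm0⟩, -, hm1⟩, e1, e2⟩
    by_cases hc : c * (2 + u + v) = u - v
    · right
      rw [mem_singleton_iff, eq_div_iff (by positivity), hc]
    · left
      have hq : (lam, c) ∈ dom u v slo shi :=
        ⟨hl, ⟨by linarith [hc1.1], by linarith [hc1.2]⟩, ⟨by linarith [hc2.1], by linarith [hc2.2]⟩,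
          hm0, hm1, hc0, hc⟩
      obtain ⟨x, hx, hxK⟩ := mem_iUnion₂.1 (hcov hq)
      exact mem_iUnion₂.2 ⟨x, hx, lam, hxK, e1, e2⟩
  obtain ⟨x, hx, hxpos⟩ : ∃ x ∈ t, 0 < volume (statK p u v slo shi (K x) f) := by
    by_contra! hcon
    refine hpos.ne' (measure_mono_null hsub (measure_union_null ?_ (measure_singleton _)))
    exact (measure_biUnion_null_iff htc).2 fun x hx => nonpos_iff_eq_zero.1 (hcon x hx)
  obtain ⟨n, hn⟩ := ENNReal.exists_inv_nat_lt hxpos.ne'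
  exact mem_iUnion.2 ⟨(⟨x, hx⟩, n), hf, hn.le⟩
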